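/- If S and S' are seeds consisting only of replicated components and S ~ S', then S ≡D S'. -/

import Mathlib

namespace CCS

/-- Process terms over a set of actions `A`. -/
inductive Proc (A : Type) where
  | nil : Proc A
  | pre : A → Proc A → Proc A
  | par : Proc A → Proc A → Proc A
  | repl : A → Proc A → Proc A

namespace Proc

/-- Finite processes: no occurrence of replication. -/
def IsFin {A : Type} : Proc A → Prop
  | nil => True
  | pre _ p => IsFin p
  | par p q => IsFin p ∧ IsFin q
  | repl _ _ => False

/-- Processes of the calculus: replication is applied only to prefixed
finite processes, at top level. -/
def Wf {A : Type} : Proc A → Prop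
  | nil => True
  | pre _ p => IsFin p
  | par p q => Wf p ∧ Wf q
  | repl _ p => IsFin p

/-- Size: the number of prefixes. -/
def size {A : Type} : Proc A → ℕ
  | nil => 0
  | pre _ p => size p + 1
  | par p q => size p + size q
  | repl _ p => size p + 1

/-- `reps n p` is the parallel composition of `n` copies of `p`. -/
def reps {A : Type} : ℕ → Proc A → Proc A
  | 0, _ => nil
  | n+1, p => par p (reps n p)

/-- `bang F` is `!F`: for `F = α₁.F₁ | ... | αk.Fk` it is `!α₁.F₁ | ... | !αk.Fk`. -/
def bang {A : Type} : Proc A → Proc A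
  | nil => nil
  | pre a p => repl a p
  | par p q => par (bang p) (bang q)
  | repl a p => repl a p

end Proc

/-- The labelled transition system (no synchronisation). -/
inductive Step {A : Type} : Proc A → A → Proc A → Prop where
  | pre {a : A} {p : Proc A} : Step (Proc.pre a p) a p
  | repl {a : A} {p : Proc A} :
      Step (Proc.repl a p) a (Proc.par (Proc.repl a p) p)
  | parL {p : Proc A} {a : A} {p' : Proc A} (q : Proc A) :
      Step p a p' → Step (Proc.par p q) a (Proc.par p' q)
  | parR {q : Proc A} {a : A} {q' : Proc A} (p : Proc A) :
      Step q a q' → Step (Proc.par p q) a (Proc.par p q')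

/-- Strong bisimulations. -/
def IsBisim {A : Type} (R : Proc A → Proc A → Prop) : Prop :=
  Symmetric R ∧
    ∀ p q, R p q → ∀ a p', Step p a p' → ∃ q', Step q a q' ∧ R p' q'

/-- Strong bisimilarity `~`: the greatest strong bisimulation. -/
def Bisim {A : Type} (p q : Proc A) : Prop :=
  ∃ R, IsBisim R ∧ R p q

/-- The congruence `≡D`: the smallest congruence generated by the abelian
monoid laws for parallel composition (neutral element `0`) and the
distribution law `α.(F | α.F | ... | α.F) = α.F | α.F | ... | α.F`
(with as many occurrences of `F` on both sides). -/
inductive EqD {A : Type} : Proc A → Proc A → Prop where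
  | refl (p : Proc A) : EqD p p
  | symm {p q : Proc A} : EqD p q → EqD q p
  | trans {p q r : Proc A} : EqD p q → EqD q r → EqD p r
  | parComm (p q : Proc A) : EqD (Proc.par p q) (Proc.par q p)
  | parAssoc (p q r : Proc A) :
      EqD (Proc.par (Proc.par p q) r) (Proc.par p (Proc.par q r))
  | parNil (p : Proc A) : EqD (Proc.par p Proc.nil) p
  | distr (a : A) (F : Proc A) (n : ℕ) (hF : F.IsFin) :
      EqD (Proc.pre a (Proc.par F (Proc.reps n (Proc.pre a F))))
          (Proc.reps (n + 1) (Proc.pre a F))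
  | congPre (a : A) {p q : Proc A} : EqD p q → EqD (Proc.pre a p) (Proc.pre a q)
  | congPar {p p' q q' : Proc A} :
      EqD p p' → EqD q q' → EqD (Proc.par p q) (Proc.par p' q')
  | congRepl (a : A) {p q : Proc A} : EqD p q → EqD (Proc.repl a p) (Proc.repl a q)

/-- Finite (single-hole) contexts `D ::= [] | α.D | D|F`. -/
inductive FCtx (A : Type) where
  | hole : FCtx A
  | pre : A → FCtx A → FCtx A
  | par : FCtx A → Proc A → FCtx A

/-- Filling the hole of a finite context. -/
def FCtx.fill {A : Type} : FCtx A → Proc A → Proc A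
  | .hole, p => p
  | .pre a d, p => Proc.pre a (d.fill p)
  | .par d f, p => Proc.par (d.fill p) f

/-- Well-formedness of a finite context: the processes placed in parallel
are finite. -/
def FCtx.Wf {A : Type} : FCtx A → Prop
  | .hole => True
  | .pre _ d => d.Wf
  | .par d f => d.Wf ∧ f.IsFin

/-- Single-hole contexts `C ::= D | !α.D | C|P` (the hole never occurs
directly under a replication). -/
inductive Ctx (A : Type) where
  | ofD : FCtx A → Ctx A
  | repl : A → FCtx A → Ctx A
  | par : Ctx A → Proc A → Ctx A

/-- Filling the hole of a context. -/
def Ctx.fill {A : Type} : Ctx A → Proc A → Proc A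
  | .ofD d, p => d.fill p
  | .repl a d, p => Proc.repl a (d.fill p)
  | .par c q, p => Proc.par (c.fill p) q

/-- Well-formedness of a context. -/
def Ctx.Wf {A : Type} : Ctx A → Prop
  | .ofD d => d.Wf
  | .repl _ d => d.Wf
  | .par c p => c.Wf ∧ p.Wf

/-- `k` consecutive transitions. -/
inductive NSteps {A : Type} : Proc A → ℕ → Proc A → Prop where
  | zero (p : Proc A) : NSteps p 0 p
  | succ {p : Proc A} {a : A} {p' : Proc A} {k : ℕ} {q : Proc A} :
      Step p a p' → NSteps p' k q → NSteps p (k + 1) q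

/-- `P ⇒k Q`: `k` transitions from `P` reach a process `≡D Q`. -/
def Reduct {A : Type} (p : Proc A) (k : ℕ) (q : Proc A) : Prop :=
  ∃ p', NSteps p k p' ∧ EqD p' q

/-- `TopRepl S a G` holds when `!a.G` is one of the (top-level) replicated
parallel components of `S`. -/
inductive TopRepl {A : Type} : Proc A → A → Proc A → Prop where
  | repl (a : A) (p : Proc A) : TopRepl (Proc.repl a p) a p
  | parL {p : Proc A} {a : A} {r : Proc A} (q : Proc A) :
      TopRepl p a r → TopRepl (Proc.par p q) a r
  | parR {q : Proc A} {a : A} {r : Proc A} (p : Proc A) :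
      TopRepl q a r → TopRepl (Proc.par p q) a r

/-- `S` has only replicated components: `S = ∏i !αi.Si`. -/
def ReplOnly {A : Type} : Proc A → Prop
  | .nil => True
  | .pre _ _ => False
  | .par p q => ReplOnly p ∧ ReplOnly q
  | .repl _ p => p.IsFin

/-- `S ⫫ F` : for no component `!αi.Si` of `S` and no `k` do we have
`F ⇒k αi.Si`. -/
def Dis {A : Type} (S F : Proc A) : Prop :=
  ∀ a G, TopRepl S a G → ∀ k, ¬ Reduct F k (Proc.pre a G)

/-- `S ▷ R` : there is `k > 0` with `S ⇒k S | R`. -/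
def Purg {A : Type} (S R : Proc A) : Prop :=
  ∃ k, 0 < k ∧ Reduct S k (Proc.par S R)

/-- A process is a seed if no (well-formed) process of strictly smaller
size is bisimilar to it. -/
def IsSeed {A : Type} (p : Proc A) : Prop :=
  p.Wf ∧ ∀ q : Proc A, q.Wf → Bisim q p → p.size ≤ q.size

/-- The rewriting relation `⤳_T` (first argument), defined modulo `≡D` by
the axioms (B1) `C[α.F] ⤳_{!α.F|F'} C[0]` and (B2) `!α.F | !α.F | P ⤳_Q !α.F | P`. -/
inductive Rw {A : Type} : Proc A → Proc A → Proc A → Prop where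
  | B1 {a : A} {F F' : Proc A} (C : Ctx A) :
      F.IsFin → F'.Wf → C.Wf →
      Rw (Proc.par (Proc.repl a F) F') (C.fill (Proc.pre a F)) (C.fill Proc.nil)
  | B2 {a : A} {F P Q : Proc A} :
      F.IsFin → P.Wf → Q.Wf →
      Rw Q (Proc.par (Proc.repl a F) (Proc.par (Proc.repl a F) P))
           (Proc.par (Proc.repl a F) P)
  | eqD {T T' P P' Q Q' : Proc A} :
      EqD T T' → EqD P P' → Rw T' P' Q' → EqD Q Q' → Rw T P Q

/-- `⤳*_T` : the reflexive transitive closure of `⤳_T`. -/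
def RwStar {A : Type} (T : Proc A) : Proc A → Proc A → Prop :=
  Relation.ReflTransGen (Rw T)

/-- Convertibility `P ⋈ Q`: some process `T` satisfies `P ⤳*_T T` and `Q ⤳*_T T`. -/
def Convert {A : Type} (P Q : Proc A) : Prop :=
  ∃ T : Proc A, T.Wf ∧ RwStar T P T ∧ RwStar T Q T

/-- `∏i αi.Fi` for a list of prefixed components. -/
def prodPre {A : Type} (l : List (A × Proc A)) : Proc A :=
  (l.map fun x => Proc.pre x.1 x.2).foldr Proc.par Proc.nil

/-- `∏i !αi.Fi` for a list of prefixed components. -/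
def bangProd {A : Type} (l : List (A × Proc A)) : Proc A :=
  (l.map fun x => Proc.repl x.1 x.2).foldr Proc.par Proc.nil

end CCS

namespace CCS

/-! ### Bisimilarity as a quotient monoid -/

theorem Bisim.refl' {A : Type} (p : Proc A) : Bisim p p :=
  ⟨Eq, ⟨fun _ _ h => h.symm, by rintro p q rfl a p' h; exact ⟨p', h, rfl⟩⟩, rfl⟩

theorem Bisim.symm' {A : Type} {p q : Proc A} (h : Bisim p q) : Bisim q p := by
  obtain ⟨R, hR, h⟩ := h
  exact ⟨R, hR, hR.1 h⟩

theorem Bisim.step {A : Type} {p q : Proc A} (h : Bisim p q) {a : A} {p' : Proc A}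
    (hs : Step p a p') : ∃ q', Step q a q' ∧ Bisim p' q' := by
  obtain ⟨R, hR, h⟩ := h
  obtain ⟨q', h1, h2⟩ := hR.2 p q h a p' hs
  exact ⟨q', h1, R, hR, h2⟩

/-- Coinduction with a not necessarily symmetric relation. -/
theorem Bisim.coind {A : Type} (R : Proc A → Proc A → Prop)
    (h1 : ∀ p q, R p q → ∀ a p', Step p a p' → ∃ q', Step q a q' ∧ R p' q')
    (h2 : ∀ p q, R p q → ∀ a q', Step q a q' → ∃ p', Step p a p' ∧ R p' q')
    {p q : Proc A} (h : R p q) : Bisim p q := by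
  refine ⟨fun p q => R p q ∨ R q p, ⟨fun _ _ h => h.symm, ?_⟩, Or.inl h⟩
  rintro p q (h | h) a p' hs
  · obtain ⟨q', h3, h4⟩ := h1 p q h a p' hs
    exact ⟨q', h3, Or.inl h4⟩
  · obtain ⟨q', h3, h4⟩ := h2 q p h a p' hs
    exact ⟨q', h3, Or.inr h4⟩

theorem Bisim.trans' {A : Type} {p q r : Proc A} (h : Bisim p q) (h' : Bisim q r) :
    Bisim p r := by
  refine Bisim.coind (fun p r => ∃ q, Bisim p q ∧ Bisim q r) ?_ ?_ ⟨q, h, h'⟩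
  · rintro p r ⟨q, h, h'⟩ a p' hs
    obtain ⟨q', h1, h2⟩ := h.step hs
    obtain ⟨r', h3, h4⟩ := h'.step h1
    exact ⟨r', h3, q', h2, h4⟩
  · rintro p r ⟨q, h, h'⟩ a p' hs
    obtain ⟨q', h1, h2⟩ := h'.symm'.step hs
    obtain ⟨r', h3, h4⟩ := h.symm'.step h1
    exact ⟨r', h3, q', h4.symm', h2.symm'⟩

theorem step_par_iff {A : Type} {p q r : Proc A} {a : A} :
    Step (Proc.par p q) a r ↔
      (∃ p', Step p a p' ∧ r = Proc.par p' q) ∨ (∃ q', Step q a q' ∧ r = Proc.par p q') := by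
  constructor
  · intro h
    cases h with
    | parL _ h => exact Or.inl ⟨_, h, rfl⟩
    | parR _ h => exact Or.inr ⟨_, h, rfl⟩
  · rintro (⟨p', h, rfl⟩ | ⟨p', h, rfl⟩)
    · exact Step.parL _ h
    · exact Step.parR _ h

theorem Bisim.par {A : Type} {p p' q q' : Proc A} (h : Bisim p p') (h' : Bisim q q') :
    Bisim (Proc.par p q) (Proc.par p' q') := by
  have key : ∀ u v : Proc A,
      (∃ p p' q q', Bisim p p' ∧ Bisim q q' ∧ u = Proc.par p q ∧ v = Proc.par p' q') →
      ∀ a u', Step u a u' → ∃ v', Step v a v' ∧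
      (∃ p p' q q', Bisim p p' ∧ Bisim q q' ∧ u' = Proc.par p q ∧ v' = Proc.par p' q') := by
    rintro _ _ ⟨p, p', q, q', h, h', rfl, rfl⟩ a u' hs
    rcases step_par_iff.1 hs with ⟨p1, h1, rfl⟩ | ⟨p1, h1, rfl⟩
    · obtain ⟨p2, h2, h3⟩ := h.step h1
      exact ⟨_, Step.parL _ h2, _, _, _, _, h3, h', rfl, rfl⟩
    · obtain ⟨p2, h2, h3⟩ := h'.step h1
      exact ⟨_, Step.parR _ h2, _, _, _, _, h, h3, rfl, rfl⟩
  refine ⟨_, ⟨?_, key⟩, ⟨p, p', q, q', h, h', rfl, rfl⟩⟩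
  rintro _ _ ⟨p, p', q, q', h, h', rfl, rfl⟩
  exact ⟨p', p, q', q, h.symm', h'.symm', rfl, rfl⟩

theorem Bisim.parComm {A : Type} (p q : Proc A) : Bisim (Proc.par p q) (Proc.par q p) := by
  have key : ∀ u v : Proc A, (∃ p q, u = Proc.par p q ∧ v = Proc.par q p) →
      ∀ a u', Step u a u' → ∃ v', Step v a v' ∧
        (∃ p q, u' = Proc.par p q ∧ v' = Proc.par q p) := by
    rintro _ _ ⟨p, q, rfl, rfl⟩ a u' hs
    rcases step_par_iff.1 hs with ⟨p1, h1, rfl⟩ | ⟨p1, h1, rfl⟩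
    · exact ⟨_, Step.parR _ h1, _, _, rfl, rfl⟩
    · exact ⟨_, Step.parL _ h1, _, _, rfl, rfl⟩
  refine ⟨_, ⟨?_, key⟩, ⟨p, q, rfl, rfl⟩⟩
  rintro _ _ ⟨p, q, rfl, rfl⟩
  exact ⟨q, p, rfl, rfl⟩

theorem Bisim.parAssoc {A : Type} (p q r : Proc A) :
    Bisim (Proc.par (Proc.par p q) r) (Proc.par p (Proc.par q r)) := by
  refine Bisim.coind (fun u v => ∃ p q r, u = Proc.par (Proc.par p q) r ∧
    v = Proc.par p (Proc.par q r)) ?_ ?_ ⟨p, q, r, rfl, rfl⟩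
  · rintro _ _ ⟨p, q, r, rfl, rfl⟩ a u' hs
    rcases step_par_iff.1 hs with ⟨p1, h1, rfl⟩ | ⟨p1, h1, rfl⟩
    · rcases step_par_iff.1 h1 with ⟨p2, h2, rfl⟩ | ⟨p2, h2, rfl⟩
      · exact ⟨_, Step.parL _ h2, _, _, _, rfl, rfl⟩
      · exact ⟨_, Step.parR _ (Step.parL _ h2), _, _, _, rfl, rfl⟩
    · exact ⟨_, Step.parR _ (Step.parR _ h1), _, _, _, rfl, rfl⟩
  · rintro _ _ ⟨p, q, r, rfl, rfl⟩ a u' hs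
    rcases step_par_iff.1 hs with ⟨p1, h1, rfl⟩ | ⟨p1, h1, rfl⟩
    · exact ⟨_, Step.parL _ (Step.parL _ h1), _, _, _, rfl, rfl⟩
    · rcases step_par_iff.1 h1 with ⟨p2, h2, rfl⟩ | ⟨p2, h2, rfl⟩
      · exact ⟨_, Step.parL _ (Step.parR _ h2), _, _, _, rfl, rfl⟩
      · exact ⟨_, Step.parR _ h2, _, _, _, rfl, rfl⟩

theorem Bisim.parNil {A : Type} (p : Proc A) : Bisim (Proc.par p Proc.nil) p := by
  refine Bisim.coind (fun u v => u = Proc.par v Proc.nil) ?_ ?_ rfl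
  · rintro _ v rfl a u' hs
    rcases step_par_iff.1 hs with ⟨p1, h1, rfl⟩ | ⟨p1, h1, rfl⟩
    · exact ⟨_, h1, rfl⟩
    · cases h1
  · rintro _ v rfl a u' hs
    exact ⟨_, Step.parL _ hs, rfl⟩

/-- The setoid of bisimilarity. -/
def bisimSetoid (A : Type) : Setoid (Proc A) :=
  ⟨Bisim, Bisim.refl', Bisim.symm', Bisim.trans'⟩

/-- The quotient by bisimilarity. -/
def Q (A : Type) : Type := Quotient (bisimSetoid A)

/-- The class of a term. -/
def cl {A : Type} (p : Proc A) : Q A := Quotient.mk (bisimSetoid A) p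

theorem cl_eq {A : Type} {p q : Proc A} : cl p = cl q ↔ Bisim p q :=
  ⟨fun h => Quotient.exact (s := bisimSetoid A) h, fun h => Quotient.sound (s := bisimSetoid A) h⟩

theorem cl_surj {A : Type} (x : Q A) : ∃ p, cl p = x := Quotient.exists_rep x

/-- Multiplication: parallel composition. -/
def Q.mul {A : Type} (x y : Q A) : Q A :=
  Quotient.map₂ (sa := bisimSetoid A) (sb := bisimSetoid A) (sc := bisimSetoid A) Proc.par
    (fun _ _ h _ _ h' => Bisim.par h h') x y

instance {A : Type} : Mul (Q A) := ⟨Q.mul⟩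

instance {A : Type} : One (Q A) := ⟨cl Proc.nil⟩

theorem cl_par {A : Type} (p q : Proc A) : cl (Proc.par p q) = cl p * cl q := rfl

theorem cl_nil {A : Type} : cl (Proc.nil : Proc A) = 1 := rfl

theorem Q.mul_comm' {A : Type} (x y : Q A) : x * y = y * x := by
  obtain ⟨p, rfl⟩ := cl_surj x
  obtain ⟨q, rfl⟩ := cl_surj y
  exact cl_eq.2 (Bisim.parComm p q)

theorem Q.mul_one' {A : Type} (x : Q A) : x * 1 = x := by
  obtain ⟨p, rfl⟩ := cl_surj x
  exact cl_eq.2 (Bisim.parNil p)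

instance {A : Type} : CommMonoid (Q A) where
  mul_assoc x y z := by
    obtain ⟨p, rfl⟩ := cl_surj x
    obtain ⟨q, rfl⟩ := cl_surj y
    obtain ⟨r, rfl⟩ := cl_surj z
    exact cl_eq.2 (Bisim.parAssoc p q r)
  mul_comm := Q.mul_comm'
  mul_one := Q.mul_one'
  one_mul x := by rw [Q.mul_comm', Q.mul_one']

/-- Transitions on the quotient. -/
def QStep {A : Type} (x : Q A) (a : A) (y : Q A) : Prop :=
  ∃ p q, cl p = x ∧ cl q = y ∧ Step p a q

theorem qstep_cl {A : Type} {p : Proc A} {a : A} {y : Q A} :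
    QStep (cl p) a y ↔ ∃ q, Step p a q ∧ y = cl q := by
  constructor
  · rintro ⟨p', q', h1, h2, h3⟩
    obtain ⟨q, h4, h5⟩ := (cl_eq.1 h1).step h3
    exact ⟨q, h4, by rw [← h2]; exact cl_eq.2 h5⟩
  · rintro ⟨q, h, rfl⟩
    exact ⟨p, q, rfl, rfl, h⟩

theorem qstep_mul {A : Type} {x y z : Q A} {a : A} :
    QStep (x * y) a z ↔
      (∃ x', QStep x a x' ∧ z = x' * y) ∨ (∃ y', QStep y a y' ∧ z = x * y') := by
  obtain ⟨p, rfl⟩ := cl_surj x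
  obtain ⟨q, rfl⟩ := cl_surj y
  rw [← cl_par]
  simp only [qstep_cl, step_par_iff]
  constructor
  · rintro ⟨r, ⟨p', h, rfl⟩ | ⟨p', h, rfl⟩, rfl⟩
    · exact Or.inl ⟨_, ⟨p', h, rfl⟩, rfl⟩
    · exact Or.inr ⟨_, ⟨p', h, rfl⟩, rfl⟩
  · rintro (⟨x', ⟨p', h, rfl⟩, rfl⟩ | ⟨x', ⟨p', h, rfl⟩, rfl⟩)
    · exact ⟨_, Or.inl ⟨p', h, rfl⟩, rfl⟩
    · exact ⟨_, Or.inr ⟨p', h, rfl⟩, rfl⟩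

theorem qstep_mul_left {A : Type} {x x' : Q A} {a : A} (h : QStep x a x') (y : Q A) :
    QStep (x * y) a (x' * y) := qstep_mul.2 (Or.inl ⟨x', h, rfl⟩)

theorem qstep_mul_right {A : Type} {x x' : Q A} {a : A} (h : QStep x a x') (y : Q A) :
    QStep (y * x) a (y * x') := qstep_mul.2 (Or.inr ⟨x', h, rfl⟩)

theorem qstep_one {A : Type} {a : A} {y : Q A} : ¬ QStep 1 a y := by
  rw [← cl_nil, qstep_cl]
  rintro ⟨q, h, _⟩
  cases h

theorem qstep_pre {A : Type} {a b : A} {p : Proc A} {y : Q A} :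
    QStep (cl (Proc.pre a p)) b y ↔ b = a ∧ y = cl p := by
  rw [qstep_cl]
  constructor
  · rintro ⟨q, h, rfl⟩
    cases h
    exact ⟨rfl, rfl⟩
  · rintro ⟨rfl, rfl⟩
    exact ⟨p, Step.pre, rfl⟩

theorem Q.coind {A : Type} (R : Q A → Q A → Prop)
    (h1 : ∀ x y, R x y → ∀ a x', QStep x a x' → ∃ y', QStep y a y' ∧ R x' y')
    (h2 : ∀ x y, R x y → ∀ a y', QStep y a y' → ∃ x', QStep x a x' ∧ R x' y')
    {x y : Q A} (h : R x y) : x = y := by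
  obtain ⟨p, rfl⟩ := cl_surj x
  obtain ⟨q, rfl⟩ := cl_surj y
  refine cl_eq.2 (Bisim.coind (fun p q => R (cl p) (cl q)) ?_ ?_ h)
  · intro p q h a p' hs
    obtain ⟨y', h3, h4⟩ := h1 _ _ h a (cl p') (qstep_cl.2 ⟨p', hs, rfl⟩)
    obtain ⟨q', h5, rfl⟩ := qstep_cl.1 h3
    exact ⟨q', h5, h4⟩
  · intro p q h a p' hs
    obtain ⟨y', h3, h4⟩ := h2 _ _ h a (cl p') (qstep_cl.2 ⟨p', hs, rfl⟩)
    obtain ⟨q', h5, rfl⟩ := qstep_cl.1 h3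
    exact ⟨q', h5, h4⟩

theorem Q.ext' {A : Type} {x y : Q A} (h : ∀ a z, QStep x a z ↔ QStep y a z) : x = y := by
  refine Q.coind (fun x y => x = y ∨ ∀ a z, QStep x a z ↔ QStep y a z) ?_ ?_ (Or.inr h)
  · rintro x y (rfl | h) a z hz
    · exact ⟨z, hz, Or.inl rfl⟩
    · exact ⟨z, (h a z).1 hz, Or.inl rfl⟩
  · rintro x y (rfl | h) a z hz
    · exact ⟨z, hz, Or.inl rfl⟩
    · exact ⟨z, (h a z).2 hz, Or.inl rfl⟩

theorem cl_pre_congr {A : Type} (a : A) {p q : Proc A} (h : cl p = cl q) :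
    cl (Proc.pre a p) = cl (Proc.pre a q) := by
  refine Q.ext' fun b z => ?_
  rw [qstep_pre, qstep_pre, h]

theorem cl_pre_inj {A : Type} {a b : A} {p q : Proc A}
    (h : cl (Proc.pre a p) = cl (Proc.pre b q)) : a = b ∧ cl p = cl q := by
  have : QStep (cl (Proc.pre b q)) a (cl p) := by
    rw [← h]; exact qstep_pre.2 ⟨rfl, rfl⟩
  exact qstep_pre.1 this

/-! ### Finite terms -/

theorem Step.isFin {A : Type} {p : Proc A} {a : A} {q : Proc A} (h : Step p a q)
    (hp : p.IsFin) : q.IsFin ∧ p.size = q.size + 1 := by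
  induction h with
  | pre => exact ⟨hp, rfl⟩
  | repl => exact hp.elim
  | parL q _ ih =>
    obtain ⟨h1, h2⟩ := ih hp.1
    exact ⟨⟨h1, hp.2⟩, by simp only [Proc.size]; omega⟩
  | parR q _ ih =>
    obtain ⟨h1, h2⟩ := ih hp.2
    exact ⟨⟨hp.1, h1⟩, by simp only [Proc.size]; omega⟩

theorem exists_step {A : Type} {p : Proc A} (hp : p.IsFin) (h : 0 < p.size) :
    ∃ a q, Step p a q := by
  induction p with
  | nil => simp [Proc.size] at h
  | pre a p _ => exact ⟨a, p, Step.pre⟩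
  | repl => exact hp.elim
  | par p q ih1 ih2 =>
    by_cases h0 : 0 < p.size
    · obtain ⟨a, p', h1⟩ := ih1 hp.1 h0
      exact ⟨a, _, Step.parL _ h1⟩
    · simp only [Proc.size] at h
      obtain ⟨a, p', h1⟩ := ih2 hp.2 (by omega)
      exact ⟨a, _, Step.parR _ h1⟩

theorem size_eq_of_cl {A : Type} : ∀ (n : ℕ) {p q : Proc A}, p.IsFin → q.IsFin →
    cl p = cl q → p.size = n → q.size = n := by
  intro n
  induction n with
  | zero =>
    intro p q hp hq h hn
    by_contra h0
    obtain ⟨a, q', h1⟩ := exists_step hq (by omega)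
    obtain ⟨p', h2, _⟩ := (cl_eq.1 h).symm'.step h1
    have := (h2.isFin hp).2
    omega
  | succ n ih =>
    intro p q hp hq h hn
    obtain ⟨a, p', h1⟩ := exists_step hp (by omega)
    obtain ⟨q', h2, h3⟩ := (cl_eq.1 h).step h1
    have h4 := h1.isFin hp
    have h5 := h2.isFin hq
    have := ih h4.1 h5.1 (cl_eq.2 h3) (by omega)
    omega

theorem cl_of_size_zero {A : Type} {p : Proc A} (hp : p.IsFin) (h : p.size = 0) :
    cl p = 1 := by
  induction p with
  | nil => rfl
  | pre => simp [Proc.size] at h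
  | repl => exact hp.elim
  | par p q ih1 ih2 =>
    simp only [Proc.size] at h
    rw [cl_par, ih1 hp.1 (by omega), ih2 hp.2 (by omega), mul_one]

/-! ### Replicated processes -/

/-- `s` behaves as the product of the replicated components listed in `l`. -/
def Gen {A : Type} (s : Q A) (l : List (A × Proc A)) : Prop :=
  ∀ a y, QStep s a y ↔ ∃ F, (a, F) ∈ l ∧ y = s * cl F

/-- No prefixed subterm is bisimilar to a component of `l`. -/
def SDis {A : Type} (l : List (A × Proc A)) : Proc A → Prop
  | .nil => True
  | .pre a p => SDis l p ∧ ∀ F, (a, F) ∈ l → cl p ≠ cl F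
  | .par p q => SDis l p ∧ SDis l q
  | .repl _ _ => False

theorem SDis.step {A : Type} {l : List (A × Proc A)} {p q : Proc A} {a : A}
    (h : SDis l p) (hs : Step p a q) : SDis l q := by
  induction hs with
  | pre => exact h.1
  | repl => exact h.elim
  | parL q _ ih => exact ⟨ih h.1, h.2⟩
  | parR q _ ih => exact ⟨h.1, ih h.2⟩

theorem gen_repl {A : Type} (a : A) (F : Proc A) : Gen (cl (Proc.repl a F)) [(a, F)] := by
  intro b y
  rw [qstep_cl]
  constructor
  · rintro ⟨q, h, rfl⟩
    cases h
    exact ⟨F, by simp, rfl⟩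
  · rintro ⟨G, h, rfl⟩
    simp only [List.mem_singleton, Prod.mk.injEq] at h
    obtain ⟨rfl, rfl⟩ := h
    exact ⟨_, Step.repl, rfl⟩

theorem Gen.append {A : Type} {s t : Q A} {l m : List (A × Proc A)} (h : Gen s l)
    (h' : Gen t m) : Gen (s * t) (l ++ m) := by
  intro a y
  rw [qstep_mul]
  constructor
  · rintro (⟨x', h1, rfl⟩ | ⟨x', h1, rfl⟩)
    · obtain ⟨F, h2, rfl⟩ := (h a x').1 h1
      exact ⟨F, by simp [h2], by ac_rfl⟩
    · obtain ⟨F, h2, rfl⟩ := (h' a x').1 h1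
      exact ⟨F, by simp [h2], by ac_rfl⟩
  · rintro ⟨F, h1, rfl⟩
    rcases List.mem_append.1 h1 with h1 | h1
    · exact Or.inl ⟨s * cl F, (h a _).2 ⟨F, h1, rfl⟩, by ac_rfl⟩
    · exact Or.inr ⟨t * cl F, (h' a _).2 ⟨F, h1, rfl⟩, by ac_rfl⟩

theorem gen_bangProd {A : Type} (l : List (A × Proc A)) : Gen (cl (bangProd l)) l := by
  induction l with
  | nil =>
    intro a y
    constructor
    · intro h
      exact (qstep_one h).elim
    · rintro ⟨F, h, _⟩
      simp at h
  | cons x l ih => exact (gen_repl x.1 x.2).append ih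

/-- Two generated elements with matching components are equal. -/
theorem Gen.unique {A : Type} {s t : Q A} {l m : List (A × Proc A)} (h : Gen s l)
    (h' : Gen t m)
    (h1 : ∀ a F, (a, F) ∈ l → ∃ G, (a, G) ∈ m ∧ s * cl F = s * cl G)
    (h2 : ∀ a G, (a, G) ∈ m → ∃ F, (a, F) ∈ l ∧ s * cl F = s * cl G) : s = t := by
  refine Q.coind (fun u v => ∃ x, u = s * x ∧ v = t * x) ?_ ?_ ⟨1, by simp, by simp⟩
  · rintro _ _ ⟨x, rfl, rfl⟩ a u' hu
    rcases qstep_mul.1 hu with ⟨x', h3, rfl⟩ | ⟨x', h3, rfl⟩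
    · obtain ⟨F, h4, rfl⟩ := (h a x').1 h3
      obtain ⟨G, h5, h6⟩ := h1 a F h4
      refine ⟨_, qstep_mul_left ((h' a _).2 ⟨G, h5, rfl⟩) x, cl G * x, ?_, ?_⟩
      · rw [h6]; ac_rfl
      · ac_rfl
    · exact ⟨_, qstep_mul_right h3 t, x', rfl, rfl⟩
  · rintro _ _ ⟨x, rfl, rfl⟩ a u' hu
    rcases qstep_mul.1 hu with ⟨x', h3, rfl⟩ | ⟨x', h3, rfl⟩
    · obtain ⟨G, h4, rfl⟩ := (h' a x').1 h3
      obtain ⟨F, h5, h6⟩ := h2 a G h4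
      refine ⟨_, qstep_mul_left ((h a _).2 ⟨F, h5, rfl⟩) x, cl G * x, ?_, ?_⟩
      · rw [h6]; ac_rfl
      · ac_rfl
    · exact ⟨_, qstep_mul_right h3 s, x', rfl, rfl⟩

theorem Gen.absorb {A : Type} {s : Q A} {l : List (A × Proc A)} (hG : Gen s l) {g h : Q A}
    (H : s * (g * h) = s) : s * g = s := by
  have key : ∀ u v : Q A, (∃ g h x, s * (g * h) = s ∧
      ((u = s * x ∧ v = s * g * x) ∨ (v = s * x ∧ u = s * g * x))) →
      ∀ a u', QStep u a u' → ∃ v', QStep v a v' ∧ (∃ g h x, s * (g * h) = s ∧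
      ((u' = s * x ∧ v' = s * g * x) ∨ (v' = s * x ∧ u' = s * g * x))) := by
    rintro _ _ ⟨g, h, x, H, ⟨rfl, rfl⟩ | ⟨rfl, rfl⟩⟩ a u' hu
    · rcases qstep_mul.1 hu with ⟨x', h3, rfl⟩ | ⟨x', h3, rfl⟩
      · obtain ⟨F, h4, rfl⟩ := (hG a x').1 h3
        exact ⟨_, qstep_mul_left (qstep_mul_left h3 g) x, g, h, cl F * x, H,
          Or.inl ⟨by ac_rfl, by ac_rfl⟩⟩
      · exact ⟨_, qstep_mul_right h3 _, g, h, x', H, Or.inl ⟨rfl, rfl⟩⟩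
    · rcases qstep_mul.1 hu with ⟨x', h3, rfl⟩ | ⟨x', h3, rfl⟩
      · rcases qstep_mul.1 h3 with ⟨y', h4, rfl⟩ | ⟨g', h4, rfl⟩
        · obtain ⟨F, h5, rfl⟩ := (hG a y').1 h4
          exact ⟨_, qstep_mul_left h4 x, g, h, cl F * x, H,
            Or.inr ⟨by ac_rfl, by ac_rfl⟩⟩
        · refine ⟨s * (g' * h) * x, ?_, h, g, g' * x, ?_, Or.inl ⟨by ac_rfl, by ac_rfl⟩⟩
          · have h6 := qstep_mul_left (qstep_mul_right (qstep_mul_left h4 h) s) x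
            rw [H] at h6
            exact h6
          · rw [mul_comm h g, H]
      · exact ⟨_, qstep_mul_right h3 _, g, h, x', H, Or.inr ⟨rfl, rfl⟩⟩
  refine Q.coind _ key ?_ ⟨g, h, 1, H, Or.inr ⟨?_, ?_⟩⟩
  · rintro x y ⟨g, h, z, H, h'⟩ a y' hy
    obtain ⟨x', h1, g, h, z, H, h2⟩ := key y x ⟨g, h, z, H, h'.symm⟩ a y' hy
    exact ⟨x', h1, g, h, z, H, h2.symm⟩
  · simp
  · simp

theorem Gen.own {A : Type} {s : Q A} {l : List (A × Proc A)} (hG : Gen s l) {a : A}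
    {F : Proc A} (hF : (a, F) ∈ l) : s * cl (Proc.pre a F) = s := by
  refine Q.coind (fun u v => u = v ∨ ∃ x, u = s * cl (Proc.pre a F) * x ∧ v = s * x) ?_ ?_
    (Or.inr ⟨1, by simp, by simp⟩)
  · rintro _ _ (rfl | ⟨x, rfl, rfl⟩) b u' hu
    · exact ⟨u', hu, Or.inl rfl⟩
    · rcases qstep_mul.1 hu with ⟨x', h3, rfl⟩ | ⟨x', h3, rfl⟩
      · rcases qstep_mul.1 h3 with ⟨y', h4, rfl⟩ | ⟨g', h4, rfl⟩
        · obtain ⟨F, h5, rfl⟩ := (hG b y').1 h4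
          exact ⟨_, qstep_mul_left h4 x, Or.inr ⟨cl F * x, by ac_rfl, by ac_rfl⟩⟩
        · obtain ⟨rfl, rfl⟩ := qstep_pre.1 h4
          exact ⟨_, qstep_mul_left ((hG b _).2 ⟨F, hF, rfl⟩) x, Or.inl rfl⟩
      · exact ⟨_, qstep_mul_right h3 _, Or.inr ⟨x', rfl, rfl⟩⟩
  · rintro _ _ (rfl | ⟨x, rfl, rfl⟩) b u' hu
    · exact ⟨u', hu, Or.inl rfl⟩
    · rcases qstep_mul.1 hu with ⟨x', h3, rfl⟩ | ⟨x', h3, rfl⟩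
      · obtain ⟨F, h5, rfl⟩ := (hG b x').1 h3
        exact ⟨_, qstep_mul_left (qstep_mul_left h3 _) x,
          Or.inr ⟨cl F * x, by ac_rfl, by ac_rfl⟩⟩
      · exact ⟨_, qstep_mul_right h3 _, Or.inr ⟨x', rfl, rfl⟩⟩

theorem Gen.preCongr {A : Type} {s : Q A} {l : List (A × Proc A)} (hG : Gen s l) (a : A)
    {X Y : Proc A} (h : s * cl X = s * cl Y) :
    s * cl (Proc.pre a X) = s * cl (Proc.pre a Y) := by
  have key : ∀ X Y : Proc A, s * cl X = s * cl Y → ∀ x b u',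
      QStep (s * cl (Proc.pre a X) * x) b u' →
      ∃ v', QStep (s * cl (Proc.pre a Y) * x) b v' ∧
        (u' = v' ∨ ∃ x, u' = s * cl (Proc.pre a X) * x ∧ v' = s * cl (Proc.pre a Y) * x) := by
    intro X Y h x b u' hu
    rcases qstep_mul.1 hu with ⟨x', h3, rfl⟩ | ⟨x', h3, rfl⟩
    · rcases qstep_mul.1 h3 with ⟨y', h4, rfl⟩ | ⟨g', h4, rfl⟩
      · obtain ⟨F, h5, rfl⟩ := (hG b y').1 h4
        exact ⟨_, qstep_mul_left (qstep_mul_left h4 _) x,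
          Or.inr ⟨cl F * x, by ac_rfl, by ac_rfl⟩⟩
      · obtain ⟨rfl, rfl⟩ := qstep_pre.1 h4
        exact ⟨_, qstep_mul_left (qstep_mul_right (qstep_pre.2 ⟨rfl, rfl⟩) _) x,
          Or.inl (by rw [h])⟩
    · exact ⟨_, qstep_mul_right h3 _, Or.inr ⟨x', rfl, rfl⟩⟩
  refine Q.coind (fun u v => u = v ∨ ∃ x, u = s * cl (Proc.pre a X) * x ∧
    v = s * cl (Proc.pre a Y) * x) ?_ ?_ (Or.inr ⟨1, by simp, by simp⟩)
  · rintro _ _ (rfl | ⟨x, rfl, rfl⟩) b u' hu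
    · exact ⟨u', hu, Or.inl rfl⟩
    · exact key X Y h x b u' hu
  · rintro _ _ (rfl | ⟨x, rfl, rfl⟩) b u' hu
    · exact ⟨u', hu, Or.inl rfl⟩
    · obtain ⟨v', h1, h2 | ⟨x, h2, h3⟩⟩ := key Y X h.symm x b u' hu
      · exact ⟨v', h1, Or.inl h2.symm⟩
      · exact ⟨v', h1, Or.inr ⟨x, h3, h2⟩⟩

theorem Gen.erase {A : Type} {s : Q A} {l : List (A × Proc A)} (hG : Gen s l) {F : Proc A}
    (hF : F.IsFin) (h : ¬ SDis l F) :
    ∃ F' : Proc A, F'.IsFin ∧ F'.size < F.size ∧ s * cl F' = s * cl F := by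
  induction F with
  | nil => exact (h trivial).elim
  | repl => exact hF.elim
  | pre a p ih =>
    by_cases hp : SDis l p
    · have : ∃ F, (a, F) ∈ l ∧ cl p = cl F := by
        by_contra h0
        push Not at h0
        exact h ⟨hp, h0⟩
      obtain ⟨G, h1, h2⟩ := this
      refine ⟨Proc.nil, trivial, by simp [Proc.size], ?_⟩
      rw [cl_nil, mul_one, cl_pre_congr a h2, hG.own h1]
    · obtain ⟨F', h1, h2, h3⟩ := ih hF hp
      exact ⟨Proc.pre a F', h1, by simp only [Proc.size]; omega, hG.preCongr a h3⟩
  | par p q ih1 ih2 =>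
    by_cases hp : SDis l p
    · have hq : ¬ SDis l q := fun hq => h ⟨hp, hq⟩
      obtain ⟨F', h1, h2, h3⟩ := ih2 hF.2 hq
      refine ⟨Proc.par p F', ⟨hF.1, h1⟩, by simp only [Proc.size]; omega, ?_⟩
      rw [cl_par, cl_par, mul_left_comm, h3, mul_left_comm]
    · obtain ⟨F', h1, h2, h3⟩ := ih1 hF.1 hp
      refine ⟨Proc.par F' q, ⟨h1, hF.2⟩, by simp only [Proc.size]; omega, ?_⟩
      rw [cl_par, cl_par, ← mul_assoc, h3, mul_assoc]

/-- Consume `G` on the right-hand side. -/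
theorem Gen.playdown {A : Type} {s : Q A} {l : List (A × Proc A)} (hG : Gen s l) :
    ∀ (n : ℕ) (G F : Proc A) (c : Q A), G.IsFin → G.size = n → F.IsFin → SDis l F →
      s * cl F * c = s * cl G →
      ∃ F' : Proc A, F'.IsFin ∧ SDis l F' ∧ F'.size ≤ F.size ∧ F.size ≤ F'.size + n ∧
        s * cl F' = s := by
  intro n
  induction n with
  | zero =>
    intro G F c hGf hn hF hD h
    refine ⟨F, hF, hD, le_rfl, le_rfl, ?_⟩
    rw [cl_of_size_zero hGf hn, mul_one, mul_assoc] at h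
    exact hG.absorb h
  | succ n ih =>
    intro G F c hGf hn hF hD h
    obtain ⟨a, G0, hs⟩ := exists_step hGf (by omega)
    have hf := hs.isFin hGf
    have h1 : QStep (s * cl F * c) a (s * cl G0) := by
      rw [h]
      exact qstep_mul_right (qstep_cl.2 ⟨G0, hs, rfl⟩) s
    rcases qstep_mul.1 h1 with ⟨x', h2, h3⟩ | ⟨c', h2, h3⟩
    · rcases qstep_mul.1 h2 with ⟨y', h4, rfl⟩ | ⟨g', h4, rfl⟩
      · obtain ⟨K, h5, rfl⟩ := (hG a y').1 h4
        obtain ⟨F', e1, e2, e3, e4, e5⟩ := ih G0 F (cl K * c) hf.1 (by omega) hF hD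
          (by rw [h3]; ac_rfl)
        exact ⟨F', e1, e2, e3, by omega, e5⟩
      · obtain ⟨F0, h5, rfl⟩ := qstep_cl.1 h4
        have hf0 := h5.isFin hF
        obtain ⟨F', e1, e2, e3, e4, e5⟩ := ih G0 F0 c hf.1 (by omega) hf0.1 (hD.step h5)
          h3.symm
        exact ⟨F', e1, e2, by omega, by omega, e5⟩
    · obtain ⟨F', e1, e2, e3, e4, e5⟩ := ih G0 F c' hf.1 (by omega) hF hD h3.symm
      exact ⟨F', e1, e2, e3, by omega, e5⟩

/-- No nontrivial absorbed disjoint process of size at most `m`. -/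
def NoAbs {A : Type} (s : Q A) (l : List (A × Proc A)) (m : ℕ) : Prop :=
  ∀ F : Proc A, F.IsFin → SDis l F → s * cl F = s → F.size ≤ m → F.size = 0

theorem Gen.size_le {A : Type} {s : Q A} {l : List (A × Proc A)} (hG : Gen s l) {m : ℕ}
    (hN : NoAbs s l m) {F G : Proc A} (c : Q A) (hF : F.IsFin) (hGf : G.IsFin) (hD : SDis l F)
    (hm : F.size ≤ m) (h : s * cl F * c = s * cl G) : F.size ≤ G.size := by
  obtain ⟨F', e1, e2, e3, e4, e5⟩ := hG.playdown _ G F c hGf rfl hF hD h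
  have := hN F' e1 e2 e5 (by omega)
  omega

theorem Gen.key {A : Type} {s : Q A} {l l' : List (A × Proc A)} (hG : Gen s l)
    (hG' : Gen s l') {m : ℕ} (hN : NoAbs s l m) (hN' : NoAbs s l' m) {F F' : Proc A}
    (hF : F.IsFin) (hF' : F'.IsFin) (hD : SDis l F) (hD' : SDis l' F')
    (hm : F.size ≤ m) (hm' : F'.size ≤ m) (h : s * cl F = s * cl F') : cl F = cl F' := by
  have main : ∀ {l l' : List (A × Proc A)}, Gen s l → Gen s l' → NoAbs s l m → NoAbs s l' m →
      ∀ {F F' : Proc A}, F.IsFin → F'.IsFin → SDis l F → SDis l' F' →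
      F.size ≤ m → F'.size ≤ m → s * cl F = s * cl F' → ∀ a F0, Step F a F0 →
      ∃ F0', Step F' a F0' ∧ s * cl F0 = s * cl F0' := by
    intro l l' hG hG' hN hN' F F' hF hF' hD hD' hm hm' h a F0 hs
    have e1 := hG.size_le hN 1 hF hF' hD hm (by rw [mul_one, h])
    have h1 : QStep (s * cl F') a (s * cl F0) := by
      rw [← h]
      exact qstep_mul_right (qstep_cl.2 ⟨F0, hs, rfl⟩) s
    have hf := hs.isFin hF
    rcases qstep_mul.1 h1 with ⟨y', h4, h5⟩ | ⟨g', h4, h5⟩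
    · obtain ⟨K, h6, rfl⟩ := (hG' a y').1 h4
      have := hG'.size_le hN' (cl K) hF' hf.1 hD' hm' (by rw [h5]; ac_rfl)
      omega
    · obtain ⟨F0', h6, rfl⟩ := qstep_cl.1 h4
      exact ⟨F0', h6, h5⟩
  refine cl_eq.2 (Bisim.coind (fun F F' => F.IsFin ∧ F'.IsFin ∧ SDis l F ∧ SDis l' F' ∧
    F.size ≤ m ∧ F'.size ≤ m ∧ s * cl F = s * cl F') ?_ ?_ ⟨hF, hF', hD, hD', hm, hm', h⟩)
  · rintro F F' ⟨hF, hF', hD, hD', hm, hm', h⟩ a F0 hs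
    obtain ⟨F0', h1, h2⟩ := main hG hG' hN hN' hF hF' hD hD' hm hm' h a F0 hs
    have := hs.isFin hF
    have := h1.isFin hF'
    exact ⟨F0', h1, (hs.isFin hF).1, (h1.isFin hF').1, hD.step hs, hD'.step h1, by omega,
      by omega, h2⟩
  · rintro F F' ⟨hF, hF', hD, hD', hm, hm', h⟩ a F0' hs
    obtain ⟨F0, h1, h2⟩ := main hG' hG hN' hN hF' hF hD' hD hm' hm h.symm a F0' hs
    have := hs.isFin hF'
    have := h1.isFin hF
    exact ⟨F0, h1, (h1.isFin hF).1, (hs.isFin hF').1, hD.step h1, hD'.step hs, by omega,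
      by omega, h2.symm⟩

/-- A nonempty finite process has a prefixed component. -/
theorem exists_comp {A : Type} {l : List (A × Proc A)} {F : Proc A} (hF : F.IsFin)
    (hD : SDis l F) (h : 0 < F.size) :
    ∃ a P c, Proc.IsFin P ∧ SDis l (Proc.pre a P) ∧ P.size + 1 ≤ F.size ∧
      cl F = cl (Proc.pre a P) * c := by
  induction F with
  | nil => simp [Proc.size] at h
  | pre a p _ => exact ⟨a, p, 1, hF, hD, le_rfl, by simp⟩
  | repl => exact hF.elim
  | par p q ih1 ih2 =>
    by_cases h0 : 0 < p.size
    · obtain ⟨a, P, c, h1, h2, h3, h4⟩ := ih1 hF.1 hD.1 h0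
      exact ⟨a, P, c * cl q, h1, h2, by simp only [Proc.size]; omega,
        by rw [cl_par, h4, mul_assoc]⟩
    · simp only [Proc.size] at h
      obtain ⟨a, P, c, h1, h2, h3, h4⟩ := ih2 hF.2 hD.2 (by omega)
      exact ⟨a, P, c * cl p, h1, h2, by simp only [Proc.size]; omega,
        by rw [cl_par, h4]; ac_rfl⟩

/-- Total size of a list of components. -/
def lsize {A : Type} (l : List (A × Proc A)) : ℕ := (l.map fun x => x.2.size + 1).sum

/-- List version of seeds. -/
structure LSeed {A : Type} (s : Q A) (l : List (A × Proc A)) : Prop where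
  gen : Gen s l
  fin : ∀ x ∈ l, x.2.IsFin
  min : ∀ l' : List (A × Proc A), (∀ x ∈ l', x.2.IsFin) → Gen s l' → lsize l ≤ lsize l'

theorem lsize_perm {A : Type} {l l' : List (A × Proc A)} (h : l.Perm l') :
    lsize l = lsize l' := (h.map _).sum_eq

theorem lsize_cons {A : Type} (x : A × Proc A) (l : List (A × Proc A)) :
    lsize (x :: l) = x.2.size + 1 + lsize l := by
  simp [lsize]

theorem LSeed.le_of_eq {A : Type} {s : Q A} {l : List (A × Proc A)} (hs : LSeed s l) {a : A}
    {F P : Proc A} (hF : (a, F) ∈ l) (hP : P.IsFin) (h : s * cl P = s * cl F) :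
    F.size ≤ P.size := by
  obtain ⟨l1, l2, rfl⟩ := List.append_of_mem hF
  have hp : (l1 ++ (a, F) :: l2).Perm ((a, F) :: (l1 ++ l2)) := List.perm_middle
  have e : s = cl (bangProd ((a, P) :: (l1 ++ l2))) := by
    refine hs.gen.unique (gen_bangProd _) ?_ ?_
    · intro b G hb
      rw [hp.mem_iff] at hb
      rcases List.mem_cons.1 hb with hb | hb
      · cases hb
        exact ⟨P, by simp, h.symm⟩
      · exact ⟨G, List.mem_cons_of_mem _ hb, rfl⟩
    · intro b G hb
      rcases List.mem_cons.1 hb with hb | hb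
      · cases hb
        exact ⟨F, by simp, h.symm⟩
      · exact ⟨G, by rw [hp.mem_iff]; exact List.mem_cons_of_mem _ hb, rfl⟩
  have := hs.min ((a, P) :: (l1 ++ l2)) (by
    intro x hx
    rcases List.mem_cons.1 hx with rfl | hx
    · exact hP
    · exact hs.fin x (by rw [hp.mem_iff]; exact List.mem_cons_of_mem _ hx))
    (by rw [e]; exact gen_bangProd _)
  rw [lsize_perm hp, lsize_cons, lsize_cons] at this
  simp only at this
  omega

theorem LSeed.sdis {A : Type} {s : Q A} {l : List (A × Proc A)} (hs : LSeed s l) {a : A}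
    {F : Proc A} (hF : (a, F) ∈ l) : SDis l F := by
  by_contra h
  obtain ⟨F', h1, h2, h3⟩ := hs.gen.erase (F := F) (hs.fin _ hF) h
  have := hs.le_of_eq hF h1 h3
  omega

theorem LSeed.noAbs {A : Type} {s : Q A} {l : List (A × Proc A)} (hs : LSeed s l) (m : ℕ) :
    NoAbs s l m := by
  induction m with
  | zero =>
    intro F _ _ _ h
    omega
  | succ m ih =>
    intro F hF hD h hm
    by_contra h0
    obtain ⟨a, P, c, hP, hDP, hsz, hc⟩ := exists_comp hF hD (by omega)
    have h1 : s * cl (Proc.pre a P) = s := by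
      rw [hc] at h
      exact hs.gen.absorb h
    have h2 : QStep s a (s * cl P) := by
      rw [← h1]
      have : QStep (s * cl (Proc.pre a P)) a (s * cl P) :=
        qstep_mul_right (qstep_pre.2 ⟨rfl, rfl⟩) s
      have h3 : s * cl (Proc.pre a P) * cl P = s * cl P := by rw [h1]
      rw [h3]
      exact this
    obtain ⟨G, h3, h4⟩ := (hs.gen a _).1 h2
    have h5 := hs.le_of_eq h3 hP h4
    exact hDP.2 G h3 (hs.gen.key hs.gen ih ih hP (hs.fin _ h3) hDP.1 (hs.sdis h3)
      (by omega) (by omega) h4)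

theorem LSeed.match {A : Type} {s : Q A} {l l' : List (A × Proc A)} (hs : LSeed s l)
    (hs' : LSeed s l') {a : A} {F : Proc A} (hF : (a, F) ∈ l) :
    ∃ F', (a, F') ∈ l' ∧ cl F = cl F' := by
  have h1 : QStep s a (s * cl F) := (hs.gen a _).2 ⟨F, hF, rfl⟩
  obtain ⟨G, h2, h3⟩ := (hs'.gen a _).1 h1
  exact ⟨G, h2, hs.gen.key hs'.gen (hs.noAbs (F.size + G.size)) (hs'.noAbs (F.size + G.size))
    (hs.fin _ hF) (hs'.fin _ h2) (hs.sdis hF) (hs'.sdis h2) (by omega) (by omega) h3⟩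

theorem LSeed.nodup {A : Type} {s : Q A} {l : List (A × Proc A)} (hs : LSeed s l) :
    (l.map fun x => (x.1, cl x.2)).Nodup := by
  have aux : ∀ l0 l1 : List (A × Proc A), l = l0 ++ l1 →
      (l1.map fun x => (x.1, cl x.2)).Nodup := by
    intro l0 l1
    induction l1 generalizing l0 with
    | nil => intro _; simp
    | cons x l1 ih =>
      intro h
      rw [List.map_cons, List.nodup_cons]
      refine ⟨?_, ih (l0 ++ [x]) (by simp [h])⟩
      intro hx
      obtain ⟨y, hy, hxy⟩ := List.mem_map.1 hx
      obtain ⟨hxy1, hxy2⟩ := Prod.mk.inj hxy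
      have hp : l.Perm (x :: (l0 ++ l1)) := by rw [h]; exact List.perm_middle
      have e : s = cl (bangProd (l0 ++ l1)) := by
        refine hs.gen.unique (gen_bangProd _) ?_ ?_
        · intro b G hb
          rw [hp.mem_iff] at hb
          rcases List.mem_cons.1 hb with hb | hb
          · refine ⟨y.2, ?_, by rw [hxy2, ← hb]⟩
            have : (b, y.2) = y := by
              rw [show b = x.1 by rw [← hb], ← hxy1]
            rw [this]
            exact List.mem_append_right _ hy
          · exact ⟨G, hb, rfl⟩
        · intro b G hb
          exact ⟨G, by rw [hp.mem_iff]; exact List.mem_cons_of_mem _ hb, rfl⟩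
      have := hs.min (l0 ++ l1) (by
        intro z hz
        exact hs.fin z (by rw [hp.mem_iff]; exact List.mem_cons_of_mem _ hz))
        (by rw [e]; exact gen_bangProd _)
      rw [lsize_perm hp, lsize_cons] at this
      omega
  exact aux [] l rfl

theorem LSeed.perm {A : Type} {s : Q A} {l l' : List (A × Proc A)} (hs : LSeed s l)
    (hs' : LSeed s l') :
    (l.map fun x => (x.1, cl x.2)).Perm (l'.map fun x => (x.1, cl x.2)) := by
  rw [List.perm_ext_iff_of_nodup hs.nodup hs'.nodup]
  rintro ⟨a, y⟩
  simp only [List.mem_map, Prod.mk.injEq]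
  constructor
  · rintro ⟨⟨b, F⟩, h1, rfl, rfl⟩
    obtain ⟨G, h2, h3⟩ := hs.match hs' h1
    exact ⟨_, h2, rfl, h3.symm⟩
  · rintro ⟨⟨b, F⟩, h1, rfl, rfl⟩
    obtain ⟨G, h2, h3⟩ := hs'.match hs h1
    exact ⟨_, h2, rfl, h3.symm⟩

/-! ### Unique decomposition -/

/-- The properties of the monoid of finite processes needed for unique decomposition. -/
structure Dec {A M : Type} [CommMonoid M] (step : M → A → M → Prop) (sz : M → ℕ) : Prop where
  sz_mul : ∀ x y, sz (x * y) = sz x + sz y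
  one_of_sz : ∀ x, sz x = 0 → x = 1
  step_sz : ∀ x a y, step x a y → sz x = sz y + 1
  step_mul : ∀ x y z a, step (x * y) a z ↔
      (∃ x', step x a x' ∧ z = x' * y) ∨ (∃ y', step y a y' ∧ z = x * y')
  ex_step : ∀ x, x ≠ 1 → ∃ a y, step x a y

/-- Indecomposable elements. -/
def Prm {M : Type} [CommMonoid M] (p : M) : Prop :=
  p ≠ 1 ∧ ∀ x y, p = x * y → x = 1 ∨ y = 1

theorem Dec.sz_one {A M : Type} [CommMonoid M] {step : M → A → M → Prop} {sz : M → ℕ}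
    (D : Dec step sz) : sz 1 = 0 := by
  have := D.sz_mul 1 1
  rw [mul_one] at this
  omega

theorem Dec.sz_pos {A M : Type} [CommMonoid M] {step : M → A → M → Prop} {sz : M → ℕ}
    (D : Dec step sz) {x : M} (h : x ≠ 1) : 0 < sz x := by
  by_contra h0
  exact h (D.one_of_sz x (by omega))

theorem Dec.exists_fac {A M : Type} [CommMonoid M] {step : M → A → M → Prop} {sz : M → ℕ}
    (D : Dec step sz) : ∀ (n : ℕ) (x : M), sz x = n →
      ∃ s : Multiset M, (∀ p ∈ s, Prm p) ∧ s.prod = x := by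
  intro n
  induction n using Nat.strong_induction_on with
  | _ n ih =>
    intro x hx
    by_cases h1 : x = 1
    · exact ⟨0, by simp, by simp [h1]⟩
    by_cases hp : Prm x
    · exact ⟨{x}, by simpa using hp, by simp⟩
    · have : ∃ y z, x = y * z ∧ y ≠ 1 ∧ z ≠ 1 := by
        by_contra h0
        push Not at h0
        refine hp ⟨h1, fun y z h => ?_⟩
        by_cases hy : y = 1
        · exact Or.inl hy
        · exact Or.inr (h0 y z h hy)
      obtain ⟨y, z, rfl, hy, hz⟩ := this
      have e := D.sz_mul y z
      have e1 := D.sz_pos hy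
      have e2 := D.sz_pos hz
      obtain ⟨s, hs1, hs2⟩ := ih (sz y) (by omega) y rfl
      obtain ⟨t, ht1, ht2⟩ := ih (sz z) (by omega) z rfl
      refine ⟨s + t, ?_, by rw [Multiset.prod_add, hs2, ht2]⟩
      intro p hp
      rcases Multiset.mem_add.1 hp with hp | hp
      · exact hs1 p hp
      · exact ht1 p hp

theorem Dec.sz_le_of_mem {A M : Type} [CommMonoid M] {step : M → A → M → Prop} {sz : M → ℕ}
    (D : Dec step sz) {s : Multiset M} {p : M} (h : p ∈ s) : sz p ≤ sz s.prod := by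
  obtain ⟨t, rfl⟩ := Multiset.exists_cons_of_mem h
  rw [Multiset.prod_cons, D.sz_mul]
  omega

theorem Dec.count_le {A M : Type} [CommMonoid M] [DecidableEq M] {step : M → A → M → Prop}
    {sz : M → ℕ} (D : Dec step sz) {p : M} (hp : p ≠ 1) (s : Multiset M) :
    s.count p ≤ sz s.prod := by
  induction s using Multiset.induction_on with
  | empty => simp
  | cons x s ih =>
    rw [Multiset.prod_cons, D.sz_mul, Multiset.count_cons]
    split_ifs with h
    · subst h
      have := D.sz_pos hp
      omega
    · omega

/-- Transitions of a product of a multiset. -/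
theorem Dec.step_prod {A M : Type} [CommMonoid M] [DecidableEq M] {step : M → A → M → Prop}
    {sz : M → ℕ} (D : Dec step sz) {s : Multiset M} {a : A} {z : M} :
    step s.prod a z ↔ ∃ q ∈ s, ∃ q', step q a q' ∧ z = q' * (s.erase q).prod := by
  constructor
  · induction s using Multiset.induction_on generalizing z with
    | empty =>
      intro h
      have := D.step_sz _ _ _ h
      rw [Multiset.prod_zero, D.sz_one] at this
      omega
    | cons x s ih =>
      intro h
      rw [Multiset.prod_cons, D.step_mul] at h
      rcases h with ⟨x', h1, rfl⟩ | ⟨y', h1, rfl⟩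
      · exact ⟨x, by simp, x', h1, by simp⟩
      · obtain ⟨q, hq, q', h2, rfl⟩ := ih h1
        refine ⟨q, by simp [hq], q', h2, ?_⟩
        by_cases hx : q = x
        · subst hx
          rw [Multiset.erase_cons_head]
          conv_rhs => rw [← Multiset.cons_erase hq, Multiset.prod_cons]
          ac_rfl
        · rw [Multiset.erase_cons_tail _ (Ne.symm hx), Multiset.prod_cons]
          ac_rfl
  · rintro ⟨q, hq, q', h, rfl⟩
    have h2 : s.prod = q * (s.erase q).prod := by
      rw [← Multiset.prod_cons, Multiset.cons_erase hq]
    rw [h2, D.step_mul]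
    exact Or.inl ⟨q', h, rfl⟩

theorem Dec.unique {A M : Type} [CommMonoid M] {step : M → A → M → Prop} {sz : M → ℕ}
    (D : Dec step sz) : ∀ (n : ℕ) (s t : Multiset M), (∀ p ∈ s, Prm p) → (∀ p ∈ t, Prm p) →
      s.prod = t.prod → sz s.prod = n → s = t := by
  classical
  intro n
  induction n using Nat.strong_induction_on with
  | _ n ih =>
    intro s t hs ht hst hn
    have hfac : ∀ x : M, ∃ u : Multiset M, (∀ p ∈ u, Prm p) ∧ u.prod = x :=
      fun x => D.exists_fac _ x rfl
    choose fac hfacP hfacE using hfac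
    -- matching of transitions
    have hmv : ∀ s t : Multiset M, (∀ p ∈ s, Prm p) → (∀ p ∈ t, Prm p) → s.prod = t.prod →
        sz s.prod = n → ∀ q ∈ s, ∀ a q', step q a q' →
        ∃ r ∈ t, ∃ r', step r a r' ∧ fac q' + s.erase q = fac r' + t.erase r := by
      intro s t hs ht hst hn q hq a q' hqs
      have h1 : step s.prod a (q' * (s.erase q).prod) := D.step_prod.2 ⟨q, hq, q', hqs, rfl⟩
      have h2 := D.step_sz _ _ _ h1
      rw [hst] at h1
      obtain ⟨r, hr, r', hrs, h3⟩ := D.step_prod.1 h1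
      refine ⟨r, hr, r', hrs, ih (sz (q' * (s.erase q).prod)) (by omega) _ _ ?_ ?_ ?_ ?_⟩
      · intro p hp
        rcases Multiset.mem_add.1 hp with hp | hp
        · exact hfacP _ p hp
        · exact hs p (Multiset.mem_of_mem_erase hp)
      · intro p hp
        rcases Multiset.mem_add.1 hp with hp | hp
        · exact hfacP _ p hp
        · exact ht p (Multiset.mem_of_mem_erase hp)
      · rw [Multiset.prod_add, Multiset.prod_add, hfacE, hfacE, h3]
      · rw [Multiset.prod_add, hfacE]
    have hzero : ∀ p q q' a, step q a q' → sz q ≤ sz p → (fac q').count p = 0 := by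
      intro p q q' a h1 h2
      rw [Multiset.count_eq_zero]
      intro h3
      have h4 := D.sz_le_of_mem h3
      rw [hfacE] at h4
      have := D.step_sz _ _ _ h1
      omega
    have main : ∀ s t : Multiset M, (∀ p ∈ s, Prm p) → (∀ p ∈ t, Prm p) → s.prod = t.prod →
        sz s.prod = n → ∀ p, t.count p < s.count p →
        (∀ q, sz p < sz q → s.count q = t.count q) → False := by
      intro s t hs ht hst hn p hlt hbig
      have hps : p ∈ s := Multiset.count_pos.1 (by omega)
      have hpP := hs p hps
      -- no factor of `s` is bigger than `p`
      have h2 : ∀ q ∈ s, sz q ≤ sz p := by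
        intro q hq
        by_contra hqp
        push Not at hqp
        -- choose a transition maximizing the count of `p`
        obtain ⟨a0, q0, hq0⟩ := D.ex_step q (hs q hq).1
        have hmax : ∃ k, (∃ a q', step q a q' ∧ (fac q').count p = k) ∧
            ∀ a q', step q a q' → (fac q').count p ≤ k := by
          let S : Set ℕ := {k | ∃ a q', step q a q' ∧ (fac q').count p = k}
          have hSne : S.Nonempty := ⟨_, a0, q0, hq0, rfl⟩
          have hSb : BddAbove S := by
            refine ⟨sz q, ?_⟩
            rintro k ⟨a, q', h, rfl⟩
            have h3 := D.count_le hpP.1 (fac q')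
            rw [hfacE] at h3
            have := D.step_sz _ _ _ h
            omega
          exact ⟨sSup S, Nat.sSup_mem hSne hSb, fun a q' h => le_csSup hSb ⟨a, q', h, rfl⟩⟩
        obtain ⟨k, ⟨a, q', hq', rfl⟩, hk⟩ := hmax
        obtain ⟨r, hr, r', hr', he⟩ := hmv s t hs ht hst hn q hq a q' hq'
        have hrq : r = q := by
          by_contra hne
          have hc := congrArg (Multiset.count q) he
          rw [Multiset.count_add, Multiset.count_add, Multiset.count_erase_self,
            Multiset.count_erase_of_ne (Ne.symm hne), hzero q q q' a hq' le_rfl,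
            hbig q hqp] at hc
          have : 0 < t.count q := by
            rw [← hbig q hqp]; exact Multiset.count_pos.2 hq
          omega
        subst hrq
        have hc := congrArg (Multiset.count p) he
        have hne : p ≠ r := by rintro rfl; omega
        rw [Multiset.count_add, Multiset.count_add, Multiset.count_erase_of_ne hne,
          Multiset.count_erase_of_ne hne] at hc
        have := hk a r' hr'
        omega
      have h2t : ∀ r ∈ t, sz r ≤ sz p := by
        intro r hr
        by_contra h
        push Not at h
        have h3 := hbig r h
        have h4 : r ∈ s := by
          apply Multiset.count_pos.1
          rw [h3]
          exact Multiset.count_pos.2 hr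
        have := h2 r h4
        omega
      -- all factors of `s` are `p`
      have h3 : ∀ q ∈ s, q = p := by
        intro q hq
        by_contra hne
        obtain ⟨a, q', hq'⟩ := D.ex_step q (hs q hq).1
        obtain ⟨r, hr, r', hr', he⟩ := hmv s t hs ht hst hn q hq a q' hq'
        have hc := congrArg (Multiset.count p) he
        rw [Multiset.count_add, Multiset.count_add, Multiset.count_erase_of_ne (Ne.symm hne),
          hzero p r r' a hr' (h2t r hr)] at hc
        have : (t.erase r).count p ≤ t.count p := Multiset.count_le_of_le _ (Multiset.erase_le _ _)
        omega
      have hsrep : s = Multiset.replicate (s.count p) p := by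
        rw [Multiset.eq_replicate.2 ⟨rfl, h3⟩]
        simp
      -- a factor of `t` different from `p`
      have h4 : ∃ r ∈ t, r ≠ p := by
        by_contra h
        push Not at h
        have htrep : t = Multiset.replicate (t.count p) p := by
          rw [Multiset.eq_replicate.2 ⟨rfl, h⟩]
          simp
        have hle : t ≤ s := by
          rw [hsrep, htrep]
          exact (Multiset.replicate_le_replicate p).2 hlt.le
        obtain ⟨u, hu⟩ := Multiset.le_iff_exists_add.1 hle
        have hup : p ∈ u := by
          apply Multiset.count_pos.1
          have := congrArg (Multiset.count p) hu
          rw [Multiset.count_add] at this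
          omega
        have e1 := D.sz_le_of_mem hup
        have e2 := D.sz_pos hpP.1
        have e3 : sz s.prod = sz t.prod + sz u.prod := by
          rw [hu, Multiset.prod_add, D.sz_mul]
        rw [hst] at e3
        omega
      obtain ⟨r, hr, hrp⟩ := h4
      obtain ⟨a, r', hr'⟩ := D.ex_step r (ht r hr).1
      obtain ⟨q, hq, q', hq', he⟩ := hmv t s ht hs hst.symm (by rw [← hst]; exact hn) r hr a r' hr'
      have hqp := h3 q hq
      subst hqp
      have hc := congrArg (Multiset.count q) he
      rw [Multiset.count_add, Multiset.count_add, Multiset.count_erase_of_ne (Ne.symm hrp),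
        Multiset.count_erase_self, hzero q r r' a hr' (h2t r hr), hzero q q q' a hq' le_rfl] at hc
      by_cases hk : s.count q = 1
      · rw [hk] at hsrep
        have e1 : q = t.prod := by
          rw [← hst, hsrep]; simp
        obtain ⟨t', rfl⟩ := Multiset.exists_cons_of_mem hr
        rw [Multiset.prod_cons] at e1
        rcases hpP.2 _ _ e1 with h | h
        · exact (ht r hr).1 h
        · rw [h, mul_one] at e1
          exact hrp e1.symm
      · have hqt : q ∈ t := Multiset.count_pos.1 (by omega)
        obtain ⟨b, q1, hq1⟩ := D.ex_step q hpP.1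
        obtain ⟨v, hv, v', hv', he'⟩ :=
          hmv t s ht hs hst.symm (by rw [← hst]; exact hn) q hqt b q1 hq1
        have hvq := h3 v hv
        subst hvq
        have hc' := congrArg (Multiset.count v) he'
        rw [Multiset.count_add, Multiset.count_add, Multiset.count_erase_self,
          Multiset.count_erase_self, hzero v v q1 b hq1 le_rfl, hzero v v v' b hv' le_rfl] at hc'
        omega
    by_contra hne
    -- a biggest prime with different counts
    have hex : ∃ p, s.count p ≠ t.count p ∧ ∀ q, sz p < sz q → s.count q = t.count q := by
      have h0 : ∃ p, s.count p ≠ t.count p := by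
        by_contra h
        push Not at h
        exact hne (Multiset.ext.2 h)
      let S : Set ℕ := {k | ∃ p, s.count p ≠ t.count p ∧ sz p = k}
      have hSne : S.Nonempty := ⟨_, h0.choose, h0.choose_spec, rfl⟩
      have hSb : BddAbove S := by
        refine ⟨n, ?_⟩
        rintro k ⟨p, hp, rfl⟩
        by_cases h : p ∈ s
        · rw [← hn]; exact D.sz_le_of_mem h
        · by_cases h' : p ∈ t
          · rw [← hn, hst]; exact D.sz_le_of_mem h'
          · rw [Multiset.count_eq_zero.2 h, Multiset.count_eq_zero.2 h'] at hp
            exact (hp rfl).elim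
      obtain ⟨p, hp1, hp2⟩ := Nat.sSup_mem hSne hSb
      refine ⟨p, hp1, fun q hq => ?_⟩
      by_contra hq'
      have : sz q ≤ sSup S := le_csSup hSb ⟨q, hq', rfl⟩
      omega
    obtain ⟨p, hp, hbig⟩ := hex
    rcases lt_or_gt_of_ne hp with h | h
    · exact main t s ht hs hst.symm (by rw [← hst]; exact hn) p h
        (fun q hq => (hbig q hq).symm)
    · exact main s t hs ht hst hn p h hbig

/-! ### The monoid of finite processes -/

/-- Classes of finite processes. -/
def finSub (A : Type) : Submonoid (Q A) where
  carrier := {x | ∃ p : Proc A, p.IsFin ∧ cl p = x}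
  one_mem' := ⟨Proc.nil, trivial, rfl⟩
  mul_mem' := by
    rintro _ _ ⟨p, hp, rfl⟩ ⟨q, hq, rfl⟩
    exact ⟨Proc.par p q, ⟨hp, hq⟩, rfl⟩

/-- The class of a finite process. -/
def fc {A : Type} (p : Proc A) (hp : p.IsFin) : finSub A := ⟨cl p, p, hp, rfl⟩

theorem fc_surj {A : Type} (x : finSub A) : ∃ p hp, fc p hp = x := by
  obtain ⟨x, p, hp, rfl⟩ := x
  exact ⟨p, hp, rfl⟩

theorem fc_par {A : Type} {p q : Proc A} (hp : p.IsFin) (hq : q.IsFin) :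
    fc (Proc.par p q) ⟨hp, hq⟩ = fc p hp * fc q hq := rfl

theorem fc_eq {A : Type} {p q : Proc A} {hp : p.IsFin} {hq : q.IsFin} :
    fc p hp = fc q hq ↔ cl p = cl q :=
  ⟨fun h => congrArg Subtype.val h, fun h => Subtype.ext h⟩

/-- Size of a class. -/
noncomputable def fsz {A : Type} (x : finSub A) : ℕ := (Classical.choose x.2).size

theorem fsz_fc {A : Type} (p : Proc A) (hp : p.IsFin) : fsz (fc p hp) = p.size := by
  have h := Classical.choose_spec (fc p hp).2
  exact size_eq_of_cl _ hp h.1 h.2.symm rfl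

/-- Transitions on classes of finite processes. -/
def fstep {A : Type} (x : finSub A) (a : A) (y : finSub A) : Prop := QStep x.1 a y.1

theorem fstep_fc {A : Type} {p : Proc A} {hp : p.IsFin} {a : A} {y : finSub A} :
    fstep (fc p hp) a y ↔ ∃ q, ∃ hq : q.IsFin, Step p a q ∧ y = fc q hq := by
  constructor
  · intro h
    obtain ⟨q, h1, h2⟩ := qstep_cl.1 h
    exact ⟨q, (h1.isFin hp).1, h1, Subtype.ext h2⟩
  · rintro ⟨q, hq, h, rfl⟩
    exact qstep_cl.2 ⟨q, h, rfl⟩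

theorem finDec (A : Type) : Dec (fstep (A := A)) fsz where
  sz_mul x y := by
    obtain ⟨p, hp, rfl⟩ := fc_surj x
    obtain ⟨q, hq, rfl⟩ := fc_surj y
    have e : fsz (fc p hp * fc q hq) = (Proc.par p q).size := fsz_fc (Proc.par p q) ⟨hp, hq⟩
    rw [e, fsz_fc, fsz_fc]
    rfl
  one_of_sz x h := by
    obtain ⟨p, hp, rfl⟩ := fc_surj x
    rw [fsz_fc] at h
    exact Subtype.ext (cl_of_size_zero hp h)
  step_sz x a y h := by
    obtain ⟨p, hp, rfl⟩ := fc_surj x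
    obtain ⟨q, hq, h1, rfl⟩ := fstep_fc.1 h
    rw [fsz_fc, fsz_fc]
    exact (h1.isFin hp).2
  step_mul x y z a := by
    obtain ⟨p, hp, rfl⟩ := fc_surj x
    obtain ⟨q, hq, rfl⟩ := fc_surj y
    constructor
    · intro h
      rw [← fc_par] at h
      obtain ⟨r, hr, h1, rfl⟩ := fstep_fc.1 h
      rcases step_par_iff.1 h1 with ⟨p', h2, rfl⟩ | ⟨p', h2, rfl⟩
      · exact Or.inl ⟨fc p' hr.1, fstep_fc.2 ⟨_, _, h2, rfl⟩, rfl⟩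
      · exact Or.inr ⟨fc p' hr.2, fstep_fc.2 ⟨_, _, h2, rfl⟩, rfl⟩
    · rintro (⟨x', h, rfl⟩ | ⟨x', h, rfl⟩)
      · exact qstep_mul_left h _
      · exact qstep_mul_right h _
  ex_step x h := by
    obtain ⟨p, hp, rfl⟩ := fc_surj x
    have h0 : 0 < p.size := by
      by_contra h0
      exact h (Subtype.ext (cl_of_size_zero hp (by omega)))
    obtain ⟨a, q, h1⟩ := exists_step hp h0
    exact ⟨a, fc q (h1.isFin hp).1, fstep_fc.2 ⟨q, _, h1, rfl⟩⟩

theorem fstep_pre {A : Type} {a b : A} {p : Proc A} {hp : p.IsFin} {y : finSub A} :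
    fstep (fc (Proc.pre a p) hp) b y ↔ b = a ∧ y = fc p hp := by
  unfold fstep
  rw [show (fc (Proc.pre a p) hp).1 = cl (Proc.pre a p) from rfl, qstep_pre]
  exact and_congr_right fun _ => ⟨fun h => Subtype.ext h, fun h => congrArg Subtype.val h⟩

theorem decomp_pre {A : Type} (a : A) (F : Proc A) (hF : F.IsFin) :
    ∃ (P : Proc A) (hP : P.IsFin) (n : ℕ), Prm (fc (Proc.pre a P) hP) ∧
      cl F = cl P * cl (Proc.pre a P) ^ n ∧
      cl (Proc.pre a F) = cl (Proc.pre a P) ^ (n + 1) := by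
  classical
  have D := finDec A
  obtain ⟨s, hsP, hs⟩ := D.exists_fac _ (fc (Proc.pre a F) hF) rfl
  have hst : ∀ p ∈ s, ∀ b p', fstep p b p' → b = a ∧ p' * (s.erase p).prod = fc F hF := by
    intro p hp b p' h
    have h1 : fstep s.prod b (p' * (s.erase p).prod) := D.step_prod.2 ⟨p, hp, p', h, rfl⟩
    rw [hs] at h1
    exact fstep_pre.1 h1
  have hne : s ≠ 0 := by
    rintro rfl
    have h1 := fsz_fc (Proc.pre a F) hF
    rw [← hs, Multiset.prod_zero, D.sz_one] at h1
    simp [Proc.size] at h1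
  obtain ⟨p, hp⟩ := Multiset.exists_mem_of_ne_zero hne
  have huniq : ∀ p ∈ s, ∀ q ∈ s, ∀ b c p' q', fstep p b p' → fstep q c q' →
      ∀ u v : Multiset (finSub A), (∀ x ∈ u, Prm x) → (∀ x ∈ v, Prm x) → u.prod = p' →
      v.prod = q' → u + s.erase p = v + s.erase q := by
    intro p hp q hq b c p' q' h1 h2 u v hu hv hup hvq
    refine D.unique _ _ _ ?_ ?_ ?_ rfl
    · intro x hx
      rcases Multiset.mem_add.1 hx with hx | hx
      · exact hu x hx
      · exact hsP x (Multiset.mem_of_mem_erase hx)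
    · intro x hx
      rcases Multiset.mem_add.1 hx with hx | hx
      · exact hv x hx
      · exact hsP x (Multiset.mem_of_mem_erase hx)
    · rw [Multiset.prod_add, Multiset.prod_add, hup, hvq, (hst p hp b p' h1).2,
        (hst q hq c q' h2).2]
  have hall : ∀ q ∈ s, q = p := by
    intro q hq
    by_contra hqp
    obtain ⟨b, p', h1⟩ := D.ex_step p (hsP p hp).1
    obtain ⟨c, q', h2⟩ := D.ex_step q (hsP q hq).1
    obtain ⟨u, hu, hup⟩ := D.exists_fac _ p' rfl
    obtain ⟨v, hv, hvq⟩ := D.exists_fac _ q' rfl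
    have he := congrArg (Multiset.count p) (huniq p hp q hq b c p' q' h1 h2 u v hu hv hup hvq)
    have h0 : u.count p = 0 := by
      rw [Multiset.count_eq_zero]
      intro h3
      have h4 := D.sz_le_of_mem h3
      rw [hup] at h4
      have := D.step_sz _ _ _ h1
      omega
    rw [Multiset.count_add, Multiset.count_add, Multiset.count_erase_self,
      Multiset.count_erase_of_ne (Ne.symm hqp), h0] at he
    have := Multiset.count_pos.2 hp
    omega
  obtain ⟨b, p', h1⟩ := D.ex_step p (hsP p hp).1
  have hba := (hst p hp b p' h1).1
  subst hba
  obtain ⟨P, hP, rfl⟩ := fc_surj p'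
  have hpe : p = fc (Proc.pre b P) hP := by
    apply Subtype.ext
    refine Q.ext' fun c z => ?_
    rw [show (fc (Proc.pre b P) hP).1 = cl (Proc.pre b P) from rfl, qstep_pre]
    constructor
    · intro h
      obtain ⟨R, hR, rfl⟩ := fc_surj p
      obtain ⟨r, hr1, rfl⟩ := qstep_cl.1 h
      have hr := (hr1.isFin hR).1
      have h2 : fstep (fc R hR) c (fc r hr) := h
      refine ⟨(hst _ hp _ _ h2).1, ?_⟩
      obtain ⟨u, hu, hup⟩ := D.exists_fac _ (fc P hP) rfl
      obtain ⟨v, hv, hvq⟩ := D.exists_fac _ (fc r hr) rfl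
      have he := huniq _ hp _ hp _ _ _ _ h1 h2 u v hu hv hup hvq
      have huv := add_right_cancel he
      rw [← fc_eq (hp := hr) (hq := hP), ← hup, ← hvq, huv]
    · rintro ⟨rfl, rfl⟩
      exact h1
  have hrep : s = Multiset.replicate (s.erase p).card p + {p} := by
    have e1 : s.erase p = Multiset.replicate (s.erase p).card p :=
      Multiset.eq_replicate.2 ⟨rfl, fun q hq => hall q (Multiset.mem_of_mem_erase hq)⟩
    rw [← e1, add_comm, Multiset.singleton_add, Multiset.cons_erase hp]
  refine ⟨P, hP, (s.erase p).card, hpe ▸ hsP p hp, ?_, ?_⟩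
  · have h2 := (hst p hp _ _ h1).2
    have e1 : s.erase p = Multiset.replicate (s.erase p).card p :=
      Multiset.eq_replicate.2 ⟨rfl, fun q hq => hall q (Multiset.mem_of_mem_erase hq)⟩
    rw [e1, Multiset.prod_replicate] at h2
    have h3 := congrArg Subtype.val h2
    have h4 : p.1 = cl (Proc.pre b P) := congrArg Subtype.val hpe
    rw [← h4]
    exact h3.symm
  · have h2 := hs
    rw [hrep, Multiset.prod_add, Multiset.prod_replicate, Multiset.prod_singleton,
      ← pow_succ] at h2
    have h3 := congrArg Subtype.val h2
    have h4 : p.1 = cl (Proc.pre b P) := congrArg Subtype.val hpe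
    rw [← h4]
    exact h3.symm

/-! ### Completeness for finite processes -/

theorem eqD_append {A β : Type} (g : β → Proc A) (l m : List β) :
    EqD (Proc.par ((l.map g).foldr Proc.par Proc.nil) ((m.map g).foldr Proc.par Proc.nil))
      (((l ++ m).map g).foldr Proc.par Proc.nil) := by
  induction l with
  | nil => exact (EqD.parComm _ _).trans (EqD.parNil _)
  | cons x l ih => exact (EqD.parAssoc _ _ _).trans (EqD.congPar (EqD.refl _) ih)

theorem eqD_middle {A β : Type} (g : β → Proc A) (y : β) (l m : List β) :
    EqD (((l ++ y :: m).map g).foldr Proc.par Proc.nil)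
      (Proc.par (g y) (((l ++ m).map g).foldr Proc.par Proc.nil)) := by
  induction l with
  | nil => exact EqD.refl _
  | cons x l ih =>
    refine (EqD.congPar (EqD.refl (g x)) ih).trans ?_
    exact (EqD.parAssoc _ _ _).symm.trans
      ((EqD.congPar (EqD.parComm _ _) (EqD.refl _)).trans (EqD.parAssoc _ _ _))

theorem eqD_perm {A β γ : Type} (g : β → Proc A) (f : β → γ) : ∀ (l l' : List β),
    (∀ x ∈ l, ∀ y ∈ l', f x = f y → EqD (g x) (g y)) → (l.map f).Perm (l'.map f) →
    EqD ((l.map g).foldr Proc.par Proc.nil) ((l'.map g).foldr Proc.par Proc.nil) := by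
  intro l
  induction l with
  | nil =>
    intro l' _ hp
    have : l' = [] := by
      have := hp.length_eq
      simp only [List.map_nil, List.length_nil, List.length_map] at this
      exact List.length_eq_zero_iff.1 this.symm
    rw [this]
    exact EqD.refl _
  | cons x l ih =>
    intro l' h hp
    have hx : f x ∈ l'.map f := hp.mem_iff.1 (by simp)
    obtain ⟨y, hy, hyx⟩ := List.mem_map.1 hx
    obtain ⟨l1, l2, rfl⟩ := List.append_of_mem hy
    have hp2 : (l.map f).Perm ((l1 ++ l2).map f) := by
      have e : ((l1 ++ y :: l2).map f).Perm (f x :: (l1 ++ l2).map f) := by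
        rw [← hyx, ← List.map_cons]
        exact List.perm_middle.map f
      exact (List.perm_cons (f x)).1 (hp.trans e)
    refine EqD.trans ?_ (eqD_middle g y l1 l2).symm
    refine EqD.congPar (h x (by simp) y (by simp) hyx.symm) (ih _ ?_ hp2)
    intro u hu v hv
    refine h u (List.mem_cons_of_mem _ hu) v ?_
    rcases List.mem_append.1 hv with hv | hv
    · simp [hv]
    · simp [hv]

open Classical in
/-- Class of a prefixed component. -/
noncomputable def fpre {A : Type} (x : A × Proc A) : finSub A :=
  if h : x.2.IsFin then fc (Proc.pre x.1 x.2) h else 1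

theorem fpre_eq {A : Type} {x : A × Proc A} (h : x.2.IsFin) :
    fpre x = fc (Proc.pre x.1 x.2) h := by
  unfold fpre
  rw [dif_pos h]

theorem cl_prodPre {A : Type} (l : List (A × Proc A)) (hl : ∀ x ∈ l, x.2.IsFin) :
    cl (prodPre l) = ((l.map fpre : Multiset (finSub A)).prod : finSub A).1 := by
  induction l with
  | nil => rfl
  | cons x l ih =>
    have h1 : cl (prodPre (x :: l)) = cl (Proc.pre x.1 x.2) * cl (prodPre l) := rfl
    have ih' := ih fun y hy => hl y (List.mem_cons_of_mem _ hy)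
    rw [h1, ih', List.map_cons, Multiset.prod_coe, Multiset.prod_coe, List.prod_cons,
      fpre_eq (hl x (by simp))]
    rfl

theorem cl_prodPre_append {A : Type} (l m : List (A × Proc A)) :
    cl (prodPre (l ++ m)) = cl (prodPre l) * cl (prodPre m) := by
  induction l with
  | nil => exact (one_mul _).symm
  | cons x l ih =>
    have h1 : cl (prodPre (x :: l)) = cl (Proc.pre x.1 x.2) * cl (prodPre l) := rfl
    have h2 : cl (prodPre (x :: l ++ m)) = cl (Proc.pre x.1 x.2) * cl (prodPre (l ++ m)) := rfl
    rw [h1, h2, ih, mul_assoc]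

theorem reps_eq {A : Type} (n : ℕ) (a : A) (P : Proc A) :
    Proc.reps n (Proc.pre a P) = prodPre (List.replicate n (a, P)) := by
  induction n with
  | zero => rfl
  | succ n ih =>
    rw [Proc.reps, ih]
    rfl

theorem cl_reps {A : Type} (n : ℕ) (p : Proc A) : cl (Proc.reps n p) = cl p ^ n := by
  induction n with
  | zero => rfl
  | succ n ih => rw [Proc.reps, cl_par, ih, pow_succ']

theorem reps_isFin {A : Type} (n : ℕ) {p : Proc A} (hp : p.IsFin) : (Proc.reps n p).IsFin := by
  induction n with
  | zero => trivial
  | succ n ih => exact ⟨hp, ih⟩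

theorem normal {A : Type} (n : ℕ)
    (IH : ∀ F G : Proc A, F.IsFin → G.IsFin → F.size < n → cl F = cl G → EqD F G)
    (F : Proc A) (hF : F.IsFin) (hn : F.size ≤ n) :
    ∃ l : List (A × Proc A), (∀ x ∈ l, x.2.IsFin) ∧ (∀ x ∈ l, Prm (fpre x)) ∧
      EqD F (prodPre l) ∧ cl F = cl (prodPre l) := by
  induction F with
  | nil => exact ⟨[], by simp, by simp, EqD.refl _, rfl⟩
  | repl => exact hF.elim
  | par p q ih1 ih2 =>
    simp only [Proc.size] at hn
    obtain ⟨l, h1, h2, h3, h4⟩ := ih1 hF.1 (by omega)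
    obtain ⟨m, k1, k2, k3, k4⟩ := ih2 hF.2 (by omega)
    refine ⟨l ++ m, ?_, ?_, (EqD.congPar h3 k3).trans (eqD_append _ l m), ?_⟩
    · intro x hx
      rcases List.mem_append.1 hx with hx | hx
      · exact h1 x hx
      · exact k1 x hx
    · intro x hx
      rcases List.mem_append.1 hx with hx | hx
      · exact h2 x hx
      · exact k2 x hx
    · rw [cl_par, h4, k4, cl_prodPre_append]
  | pre a F _ =>
    obtain ⟨P, hP, k, h1, h2, h3⟩ := decomp_pre a F hF
    refine ⟨List.replicate (k + 1) (a, P), ?_, ?_, ?_, ?_⟩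
    · intro x hx
      rw [List.eq_of_mem_replicate hx]
      exact hP
    · intro x hx
      rw [List.eq_of_mem_replicate hx, fpre_eq (x := (a, P)) hP]
      exact h1
    · have e : EqD F (Proc.par P (Proc.reps k (Proc.pre a P))) := by
        refine IH _ _ hF ⟨hP, reps_isFin k hP⟩ ?_ ?_
        · simp only [Proc.size] at hn
          omega
        · rw [h2, cl_par, cl_reps]
      rw [← reps_eq]
      exact (EqD.congPre a e).trans (EqD.distr a P k hP)
    · rw [← reps_eq, cl_reps, h3]

theorem complete_fin {A : Type} : ∀ (n : ℕ) (F G : Proc A), F.IsFin → G.IsFin → F.size = n →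
    cl F = cl G → EqD F G := by
  intro n
  induction n using Nat.strong_induction_on with
  | _ n ih =>
    intro F G hF hG hn h
    have IH : ∀ F G : Proc A, F.IsFin → G.IsFin → F.size < n → cl F = cl G → EqD F G :=
      fun F G hF hG hlt h => ih F.size hlt F G hF hG rfl h
    have hGn : G.size = n := size_eq_of_cl n hF hG h hn
    obtain ⟨l, h1, h2, h3, h4⟩ := normal n IH F hF hn.le
    obtain ⟨m, k1, k2, k3, k4⟩ := normal n IH G hG hGn.le
    have hl : (l.map fpre : Multiset (finSub A)).prod = fc F hF :=
      Subtype.ext ((cl_prodPre l h1).symm.trans h4.symm)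
    have hm : (m.map fpre : Multiset (finSub A)).prod = fc G hG :=
      Subtype.ext ((cl_prodPre m k1).symm.trans k4.symm)
    have hu := (finDec A).unique _ (l.map fpre : Multiset (finSub A)) (m.map fpre) (by
      intro p hp
      obtain ⟨x, hx, rfl⟩ := List.mem_map.1 (Multiset.mem_coe.1 hp)
      exact h2 x hx) (by
      intro p hp
      obtain ⟨x, hx, rfl⟩ := List.mem_map.1 (Multiset.mem_coe.1 hp)
      exact k2 x hx) (by rw [hl, hm]; exact fc_eq.2 h) rfl
    refine h3.trans (EqD.trans ?_ k3.symm)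
    refine eqD_perm (fun x : A × Proc A => Proc.pre x.1 x.2) fpre l m ?_ (Multiset.coe_eq_coe.1 hu)
    intro x hx y hy hxy
    have hsz : fsz (fpre x) ≤ n := by
      have := (finDec A).sz_le_of_mem (s := (l.map fpre : Multiset (finSub A))) (p := fpre x)
        (Multiset.mem_coe.2 (List.mem_map.2 ⟨x, hx, rfl⟩))
      rw [hl, fsz_fc, hn] at this
      exact this
    have hx1 : fsz (fpre x) = (Proc.pre x.1 x.2).size := by
      rw [fpre_eq (h1 x hx)]
      exact fsz_fc (Proc.pre x.1 x.2) (h1 x hx)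
    rw [hx1] at hsz
    have hxy2 : cl (Proc.pre x.1 x.2) = cl (Proc.pre y.1 y.2) := by
      rw [fpre_eq (h1 x hx), fpre_eq (k1 y hy)] at hxy
      exact congrArg Subtype.val hxy
    obtain ⟨e1, e2⟩ := cl_pre_inj hxy2
    simp only [Proc.size] at hsz
    have := IH x.2 y.2 (h1 x hx) (k1 y hy) (by omega) e2
    show EqD (Proc.pre x.1 x.2) (Proc.pre y.1 y.2)
    rw [e1]
    exact EqD.congPre _ this

/-! ### The final statement -/

theorem comps {A : Type} (S : Proc A) (hS : ReplOnly S) :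
    ∃ l : List (A × Proc A), (∀ x ∈ l, x.2.IsFin) ∧ EqD S (bangProd l) ∧ Gen (cl S) l ∧
      lsize l = S.size := by
  induction S with
  | nil => exact ⟨[], by simp, EqD.refl _, gen_bangProd [], rfl⟩
  | pre => exact hS.elim
  | repl a p _ =>
    refine ⟨[(a, p)], ?_, (EqD.parNil _).symm, gen_repl a p, ?_⟩
    · intro x hx
      rw [List.mem_singleton.1 hx]
      exact hS
    · simp [lsize, Proc.size]
  | par p q ih1 ih2 =>
    obtain ⟨l, h1, h2, h3, h4⟩ := ih1 hS.1
    obtain ⟨m, k1, k2, k3, k4⟩ := ih2 hS.2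
    refine ⟨l ++ m, ?_, (EqD.congPar h2 k2).trans (eqD_append _ l m), h3.append k3, ?_⟩
    · intro x hx
      rcases List.mem_append.1 hx with hx | hx
      · exact h1 x hx
      · exact k1 x hx
    · rw [Proc.size, ← h4, ← k4]
      simp [lsize]

theorem bangProd_wf {A : Type} (l : List (A × Proc A)) (hl : ∀ x ∈ l, x.2.IsFin) :
    (bangProd l).Wf ∧ (bangProd l).size = lsize l := by
  induction l with
  | nil => exact ⟨trivial, rfl⟩
  | cons x l ih =>
    obtain ⟨h1, h2⟩ := ih fun y hy => hl y (List.mem_cons_of_mem _ hy)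
    refine ⟨⟨hl x (by simp), h1⟩, ?_⟩
    rw [lsize_cons, ← h2]
    rfl

theorem lseed_of_seed {A : Type} (S : Proc A) (hS : ReplOnly S) (hs : IsSeed S) :
    ∃ l : List (A × Proc A), EqD S (bangProd l) ∧ LSeed (cl S) l := by
  obtain ⟨l, h1, h2, h3, h4⟩ := comps S hS
  refine ⟨l, h2, h3, h1, ?_⟩
  intro l' hf hg
  obtain ⟨e1, e2⟩ := bangProd_wf l' hf
  rw [h4, ← e2]
  refine hs.2 _ e1 (cl_eq.1 ?_)
  exact ((gen_bangProd l').unique hg (fun a F h => ⟨F, h, rfl⟩) (fun a F h => ⟨F, h, rfl⟩))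

end CCS

/-- If `S` and `S'` are seeds with only replicated components and `S ~ S'`,
then `S ≡D S'`. -/
theorem eqD_of_bisim_repl_seeds {A : Type} [Countable A]
    (S S' : CCS.Proc A) (hS : CCS.ReplOnly S) (hS' : CCS.ReplOnly S')
    (hs : CCS.IsSeed S) (hs' : CCS.IsSeed S')
    (h : CCS.Bisim S S') :
    CCS.EqD S S' := by
  obtain ⟨l, h1, h2⟩ := CCS.lseed_of_seed S hS hs
  obtain ⟨l', k1, k2⟩ := CCS.lseed_of_seed S' hS' hs'
  rw [← CCS.cl_eq.2 h] at k2
  refine h1.trans (CCS.EqD.trans ?_ k1.symm)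
  refine CCS.eqD_perm (fun x : A × CCS.Proc A => CCS.Proc.repl x.1 x.2)
    (fun x : A × CCS.Proc A => (x.1, CCS.cl x.2)) l l' ?_ (h2.perm k2)
  intro x hx y hy hxy
  obtain ⟨e1, e2⟩ := Prod.mk.inj hxy
  show CCS.EqD (CCS.Proc.repl x.1 x.2) (CCS.Proc.repl y.1 y.2)
  rw [e1]
  exact CCS.EqD.congRepl _ (CCS.complete_fin _ _ _ (h2.fin x hx) (k2.fin y hy) rfl e2)
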